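/- arXiv:0710.1412 — 3 statements merged into one kernel-verified Lean document; each statement's English description precedes it below -/
import Mathlib

section
/- Let G be a group equipped with a conjugation-invariant norm ν, let H ≤ G be a subgroup, let m ≥ 1, and let φ ∈ G be such that the subgroups φⁱHφ⁻ⁱ, i = 0,1,…,m, pairwise commute elementwise. Then every element x ∈ G that is a product of m commutators [f₁,g₁]⋯[f_m,g_m] with all f_i, g_i ∈ H satisfies ν(x) ≤ 14·ν(φ). -/
open scoped commutatorElement

/-- A conjugation-invariant norm on a group `G`. -/
def IsConjInvNorm {G : Type*} [Group G] (ν : G → ℝ) : Prop :=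
  ν 1 = 0 ∧ (∀ f : G, 0 ≤ ν f) ∧ (∀ f : G, ν f⁻¹ = ν f) ∧
    (∀ f g : G, ν (f * g) ≤ ν f + ν g) ∧ (∀ f g : G, ν (g * f * g⁻¹) = ν f) ∧
    (∀ f : G, f ≠ 1 → 0 < ν f)

/-!
Since the conjugates `φⁱHφ⁻ⁱ` commute, `Φ(z₀, …, zₘ) = ∏ φⁱ zᵢ φ⁻ⁱ` is a homomorphism `Hᵐ⁺¹ → G`.
If `z₀ ⋯ zₘ = 1`, then `zᵢ = pᵢ⁻¹ pᵢ₊₁` for the partial products `pᵢ` of `z`, and `p₀ = pₘ₊₁ = 1`.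
Conjugation by `φ` shifts tuples by one place, so `Φ(p₀, …, pₘ) = φ Φ(p₁, …, pₘ₊₁) φ⁻¹` and
`Φ(z) = ⁅φ, Φ(p₁, …, pₘ₊₁)⁻¹⁆`, whence `ν(Φ(z)) ≤ 2ν(φ)`.

Put `cᵢ = ⁅fᵢ, gᵢ⁆` and `x = c₁ ⋯ cₘ`. Then `x⁻¹ = Φ(x⁻¹, c₁, …, cₘ) Φ(1, c₁, …, cₘ)⁻¹`, where the
entries of the first tuple multiply to `1`. The second factor is the inverse of the commutator of
`Φ(1, f₁, …, fₘ)` and `Φ((g₁ ⋯ gₘ)⁻¹, g₁, …, gₘ)`: the zeroth entry of the latter is free, as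
it commutes with `1`, and this choice makes its entries multiply to `1`. Altogether
`ν(x) ≤ 2ν(φ) + 2 · 2ν(φ)`.
-/

/-- The underlying seminorm of a conjugation-invariant norm, without its conjugation invariance and
definiteness. -/
def IsConjInvNorm.toGroupSeminorm {G : Type*} [Group G] {ν : G → ℝ} (hν : IsConjInvNorm ν) :
    GroupSeminorm G where
  toFun := ν
  map_one' := hν.1
  mul_le' := hν.2.2.2.1
  inv' := hν.2.2.1

section Seminorm

variable {G : Type*} [Group G] {ν : GroupSeminorm G}

theorem seminorm_commutator_le_left (hν : ∀ a b : G, ν (b * a * b⁻¹) = ν a) (a b : G) :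
    ν ⁅a, b⁆ ≤ 2 * ν a := by
  calc ν ⁅a, b⁆ = ν (a * (b * a⁻¹ * b⁻¹)) := by simp only [commutatorElement_def, mul_assoc]
    _ ≤ ν a + ν (b * a⁻¹ * b⁻¹) := map_mul_le_add ν _ _
    _ = 2 * ν a := by rw [hν, map_inv_eq_map, two_mul]

theorem seminorm_commutator_le_right (hν : ∀ a b : G, ν (b * a * b⁻¹) = ν a) (a b : G) :
    ν ⁅a, b⁆ ≤ 2 * ν b := by
  rw [← map_inv_eq_map ν, commutatorElement_inv]
  exact seminorm_commutator_le_left hν b a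

end Seminorm

/-- The embedding `a ↦ φⁱaφ⁻ⁱ` of a subgroup `H` into `G`, with image the conjugate `φⁱHφ⁻ⁱ`. -/
def conjPowHom {G : Type*} [Group G] (φ : G) (H : Subgroup G) (i : ℕ) : H →* G :=
  (MulAut.conj (φ ^ i)).toMonoidHom.comp H.subtype

theorem conjPowHom_zero {G : Type*} [Group G] (φ : G) (H : Subgroup G) :
    conjPowHom φ H 0 = H.subtype := by
  ext a
  simp [conjPowHom]

theorem conjPowHom_succ_apply {G : Type*} [Group G] (φ : G) (H : Subgroup G) (i : ℕ) (a : H) :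
    conjPowHom φ H (i + 1) a = MulAut.conj φ (conjPowHom φ H i a) := by
  simp [conjPowHom, pow_succ', mul_assoc]

/-- `φ` `m`-displaces the subgroup `H`: the conjugates `φⁱHφ⁻ⁱ`, `0 ≤ i ≤ m`, pairwise commute
elementwise. The exponents are indexed by `Fin (m + 1)`. -/
abbrev Displaces {G : Type*} [Group G] (φ : G) (m : ℕ) (H : Subgroup G) : Prop :=
  Pairwise fun i j : Fin (m + 1) => ∀ a b : H, Commute (conjPowHom φ H i a) (conjPowHom φ H j b)

namespace Displaces

variable {G : Type*} [Group G] {φ : G} {m : ℕ} {H : Subgroup G}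

/-- The homomorphism `Φ(z₀, …, zₘ) = ∏ φⁱ zᵢ φ⁻ⁱ` from `Hᵐ⁺¹` to `G`. -/
def conjProd (hd : Displaces φ m H) : (Fin (m + 1) → H) →* G :=
  MonoidHom.noncommPiCoprod (fun i : Fin (m + 1) => conjPowHom φ H i) hd

theorem conjProd_eq_prod_ofFn (hd : Displaces φ m H) (z : Fin (m + 1) → H) :
    hd.conjProd z = (List.ofFn fun i => conjPowHom φ H i (z i)).prod := by
  simp only [conjProd, MonoidHom.noncommPiCoprod_apply, Finset.noncommProd, Fin.univ_val_map,
    Multiset.noncommProd_coe]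

theorem conjProd_mulSingle_zero (hd : Displaces φ m H) (a : H) :
    hd.conjProd (Pi.mulSingle 0 a) = a := by
  rw [conjProd, MonoidHom.noncommPiCoprod_mulSingle, Fin.val_zero, conjPowHom_zero,
    Subgroup.subtype_apply]

theorem conj_conjProd_tail (hd : Displaces φ m H) {p : Fin (m + 2) → H}
    (h_zero : p 0 = 1) (h_last : p (Fin.last (m + 1)) = 1) :
    MulAut.conj φ (hd.conjProd (Fin.tail p)) = hd.conjProd (Fin.init p) := by
  rw [conjProd_eq_prod_ofFn, conjProd_eq_prod_ofFn, List.ofFn_succ', List.ofFn_succ]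
  simp [Fin.tail, Fin.init, h_zero, h_last, map_list_prod, conjPowHom_succ_apply,
    Function.comp_def]

theorem exists_conjProd_eq_commutator (hd : Displaces φ m H) {z : Fin (m + 1) → H}
    (hz : (List.ofFn z).prod = 1) : ∃ a : G, hd.conjProd z = ⁅φ, a⁆ := by
  let p := Fin.partialProd z
  have h_zero : p 0 = 1 := Fin.partialProd_zero z
  have h_last : p (Fin.last (m + 1)) = 1 := by
    rw [← hz]
    simp only [p, Fin.partialProd, Fin.val_last, List.take_of_length_le, List.length_ofFn, le_refl]
  have h_quot : z = (Fin.init p)⁻¹ * Fin.tail p :=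
    funext fun i => (Fin.partialProd_right_inv z i).symm
  refine ⟨(hd.conjProd (Fin.tail p))⁻¹, ?_⟩
  rw [h_quot, map_mul, map_inv, ← hd.conj_conjProd_tail h_zero h_last, MulAut.conj_apply,
    commutatorElement_def]
  group

theorem seminorm_conjProd_le (hd : Displaces φ m H) {ν : GroupSeminorm G}
    (hν : ∀ a b : G, ν (b * a * b⁻¹) = ν a) {z : Fin (m + 1) → H}
    (hz : (List.ofFn z).prod = 1) : ν (hd.conjProd z) ≤ 2 * ν φ := by
  obtain ⟨a, ha⟩ := hd.exists_conjProd_eq_commutator hz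
  exact ha ▸ seminorm_commutator_le_left hν φ a

theorem seminorm_conjProd_cons_one_commutator_le (hd : Displaces φ m H) {ν : GroupSeminorm G}
    (hν : ∀ a b : G, ν (b * a * b⁻¹) = ν a) (f g : Fin m → H) :
    ν (hd.conjProd (Fin.cons 1 fun i => ⁅f i, g i⁆)) ≤ 4 * ν φ := by
  let f' : Fin (m + 1) → H := Fin.cons 1 f
  let g' : Fin (m + 1) → H := Fin.cons (List.ofFn g).prod⁻¹ g
  have h_comm : (Fin.cons 1 fun i => ⁅f i, g i⁆) = ⁅f', g'⁆ := by
    funext i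
    cases i using Fin.cases <;> simp [f', g', commutatorElement_def]
  have h_prod : (List.ofFn g').prod = 1 := by simp [g', List.ofFn_succ]
  calc ν (hd.conjProd (Fin.cons 1 fun i => ⁅f i, g i⁆))
      = ν ⁅hd.conjProd f', hd.conjProd g'⁆ := by rw [h_comm, map_commutatorElement]
    _ ≤ 2 * ν (hd.conjProd g') := seminorm_commutator_le_right hν _ _
    _ ≤ 2 * (2 * ν φ) := by gcongr; exact hd.seminorm_conjProd_le hν h_prod
    _ = 4 * ν φ := by ring

end Displaces

theorem norm_le_of_m_displaceable_general {G : Type*} [Group G] {ν : GroupSeminorm G}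
    (hν : ∀ a b : G, ν (b * a * b⁻¹) = ν a) {φ : G} {m : ℕ} {H : Subgroup G}
    (hd : Displaces φ m H) (f g : Fin m → H) :
    ν (List.ofFn fun i => ⁅(f i : G), (g i : G)⁆).prod ≤ 6 * ν φ := by
  let x : H := (List.ofFn fun i => ⁅f i, g i⁆).prod
  let c : Fin (m + 1) → H := Fin.cons 1 fun i => ⁅f i, g i⁆
  let z : Fin (m + 1) → H := Fin.cons x⁻¹ fun i => ⁅f i, g i⁆
  have h_coe : (x : G) = (List.ofFn fun i => ⁅(f i : G), (g i : G)⁆).prod := by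
    simp [x, commutatorElement_def, Function.comp_def]
  have h_single : Pi.mulSingle 0 x⁻¹ = z * c⁻¹ := by
    funext i
    cases i using Fin.cases <;> simp [z, c, -commutatorElement_inv]
  have h_prod : (List.ofFn z).prod = 1 := by simp [z, x, List.ofFn_succ]
  calc ν (List.ofFn fun i => ⁅(f i : G), (g i : G)⁆).prod
      = ν (hd.conjProd (Pi.mulSingle 0 x⁻¹)) := by
        rw [hd.conjProd_mulSingle_zero, Subgroup.coe_inv, map_inv_eq_map, h_coe]
    _ = ν (hd.conjProd z / hd.conjProd c) := by rw [h_single, ← div_eq_mul_inv, map_div]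
    _ ≤ ν (hd.conjProd z) + ν (hd.conjProd c) := map_div_le_add ν _ _
    _ ≤ 2 * ν φ + 4 * ν φ := add_le_add (hd.seminorm_conjProd_le hν h_prod)
        (hd.seminorm_conjProd_cons_one_commutator_le hν f g)
    _ = 6 * ν φ := by ring

/-- If `φ` strongly `m`-displaces the subgroup `H` (the conjugates `φⁱHφ⁻ⁱ`,
`i = 0,…,m`, pairwise commute elementwise), then any product of `m` commutators
of elements of `H` satisfies `ν(x) ≤ 14 ν(φ)`. -/
theorem norm_le_of_m_displaceable {G : Type*} [Group G]
    (ν : G → ℝ) (hν : IsConjInvNorm ν) (H : Subgroup G) (m : ℕ) (hm : 1 ≤ m) (φ : G)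
    (hd : ∀ i j : ℕ, i ≤ m → j ≤ m → i ≠ j →
      ∀ a ∈ H, ∀ b ∈ H, Commute (φ ^ i * a * (φ ^ i)⁻¹) (φ ^ j * b * (φ ^ j)⁻¹))
    (x : G) (f g : Fin m → G) (hf : ∀ i, f i ∈ H) (hg : ∀ i, g i ∈ H)
    (hx : x = (List.ofFn fun i => ⁅f i, g i⁆).prod) :
    ν x ≤ 14 * ν φ := by
  have hd' : Displaces φ m H := fun i j hij a b =>
    hd i j i.is_le j.is_le (Fin.val_ne_of_ne hij) a a.2 b b.2
  calc ν x ≤ 6 * ν φ := hx ▸ norm_le_of_m_displaceable_general (ν := hν.toGroupSeminorm)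
        hν.2.2.2.2.1 hd' (fun i => ⟨f i, hf i⟩) (fun i => ⟨g i, hg i⟩)
    _ ≤ 14 * ν φ := by gcongr; exacts [hν.2.1 φ, by norm_num]
end

section
/- Let G be a group, H ≤ G a subgroup, and F ∈ G such that the subgroups H, FHF⁻¹ and F²HF⁻² pairwise commute elementwise. Then every commutator [f,g] with f,g ∈ H is a product of two F-commutators; explicitly, [f,g] is the product of the two F-commutators (fg)·F g⁻¹ F⁻¹·F² f⁻¹ F⁻² and (f⁻¹g⁻¹)·F g F⁻¹·F² f F⁻². -/
open scoped commutatorElement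

/-- An `F`-commutator: an element of the form `f[F,h]f⁻¹`. -/
def IsFCommutator {G : Type*} [Group G] (F x : G) : Prop :=
  ∃ f h : G, x = f * ⁅F, h⁆ * f⁻¹

/-!
Write `σ` for conjugation by `F`, so that `[F, h] = σ(h) h⁻¹`. For `h = a⁻¹ σ(c)` this is
`σ(a⁻¹) σ²(c) σ(c⁻¹) a`, and commuting factors conjugated by different powers of `F` turns it into
`a · σ(a⁻¹ c⁻¹) · σ²(c)`. Hence `a · σ(b) · σ²(c)` is an `F`-commutator whenever `a b c = 1`,
which applies to both `(f g, g⁻¹, f⁻¹)` and `(f⁻¹ g⁻¹, g, f)`. In the product of the two resulting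
elements the factors `σ(·)` and `σ²(·)` cancel, leaving `f g f⁻¹ g⁻¹`.
-/

section

variable {G : Type*} [Group G]

theorem isFCommutator_commutator (F h : G) : IsFCommutator F ⁅F, h⁆ :=
  ⟨1, h, by simp⟩

theorem isFCommutator_mul_conj_mul_conj_sq {F a b c : G} (habc : a * b * c = 1)
    (hab : Commute a (F * b * F⁻¹)) (hac : Commute a (F ^ 2 * c * (F ^ 2)⁻¹))
    (hc : Commute c (F * c * F⁻¹)) :
    IsFCommutator F (a * (F * b * F⁻¹) * (F ^ 2 * c * (F ^ 2)⁻¹)) := by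
  have hb : b = a⁻¹ * c⁻¹ := eq_inv_mul_of_mul_eq (eq_inv_of_mul_eq_one_left habc)
  suffices h : a * (F * b * F⁻¹) * (F ^ 2 * c * (F ^ 2)⁻¹) = ⁅F, a⁻¹ * (F * c * F⁻¹)⁆ from
    h ▸ isFCommutator_commutator F _
  calc a * (F * b * F⁻¹) * (F ^ 2 * c * (F ^ 2)⁻¹)
      = (F * b * F⁻¹) * (F ^ 2 * c * (F ^ 2)⁻¹) * a := by
        rw [mul_assoc, (hab.mul_right hac).eq]
    _ = F * a⁻¹ * (c⁻¹ * (F * c * F⁻¹)) * F⁻¹ * a := by rw [hb]; group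
    _ = F * a⁻¹ * ((F * c * F⁻¹) * c⁻¹) * F⁻¹ * a := by rw [hc.inv_left.eq]
    _ = ⁅F, a⁻¹ * (F * c * F⁻¹)⁆ := by rw [commutatorElement_def]; group

theorem mul_mul_mul_mul_inv_mul_inv_of_commute {a b x y : G} (hbx : Commute b x)
    (hby : Commute b y) (hxy : Commute x y) : a * x * y * (b * x⁻¹ * y⁻¹) = a * b := by
  calc a * x * y * (b * x⁻¹ * y⁻¹) = a * (x * y * b) * (x⁻¹ * y⁻¹) := by simp only [mul_assoc]
    _ = a * (b * (x * y)) * (x * y)⁻¹ := by rw [(hbx.mul_right hby).eq, hxy.mul_inv]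
    _ = a * b := by rw [← mul_assoc, mul_inv_cancel_right]

end

/-- If `H`, `FHF⁻¹` and `F²HF⁻²` pairwise commute elementwise, then every
commutator of elements of `H` is a product of the two explicitly given
`F`-commutators. -/
theorem commutator_eq_prod_two_F_commutators {G : Type*} [Group G]
    (H : Subgroup G) (F : G)
    (hd : ∀ i j : ℕ, i ≤ 2 → j ≤ 2 → i ≠ j →
      ∀ a ∈ H, ∀ b ∈ H, Commute (F ^ i * a * (F ^ i)⁻¹) (F ^ j * b * (F ^ j)⁻¹))
    (f g : G) (hf : f ∈ H) (hg : g ∈ H) :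
    IsFCommutator F ((f * g) * (F * g⁻¹ * F⁻¹) * (F ^ 2 * f⁻¹ * (F ^ 2)⁻¹)) ∧
    IsFCommutator F ((f⁻¹ * g⁻¹) * (F * g * F⁻¹) * (F ^ 2 * f * (F ^ 2)⁻¹)) ∧
    ⁅f, g⁆ = ((f * g) * (F * g⁻¹ * F⁻¹) * (F ^ 2 * f⁻¹ * (F ^ 2)⁻¹)) *
      ((f⁻¹ * g⁻¹) * (F * g * F⁻¹) * (F ^ 2 * f * (F ^ 2)⁻¹)) := by
  have h01 : ∀ a ∈ H, ∀ b ∈ H, Commute a (F * b * F⁻¹) := by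
    simpa using hd 0 1 (by simp) (by simp) (by simp)
  have h02 : ∀ a ∈ H, ∀ b ∈ H, Commute a (F ^ 2 * b * (F ^ 2)⁻¹) := by
    simpa using hd 0 2 (by simp) (by simp) (by simp)
  have h12 : ∀ a ∈ H, ∀ b ∈ H, Commute (F * a * F⁻¹) (F ^ 2 * b * (F ^ 2)⁻¹) := by
    simpa using hd 1 2 (by simp) (by simp) (by simp)
  have hf' := H.inv_mem hf
  have hg' := H.inv_mem hg
  have hfg := H.mul_mem hf hg
  have hfg' := H.mul_mem hf' hg'
  refine ⟨isFCommutator_mul_conj_mul_conj_sq (by group) (h01 _ hfg _ hg') (h02 _ hfg _ hf')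
      (h01 _ hf' _ hf'),
    isFCommutator_mul_conj_mul_conj_sq (by group) (h01 _ hfg' _ hg) (h02 _ hfg' _ hf)
      (h01 _ hf _ hf), ?_⟩
  calc ⁅f, g⁆ = (f * g) * (f⁻¹ * g⁻¹) := by rw [commutatorElement_def, mul_assoc (f * g)]
    _ = _ := by
      simpa only [conj_inv, inv_inv] using (mul_mul_mul_mul_inv_mul_inv_of_commute
        (h01 _ hfg' _ hg') (h02 _ hfg' _ hf') (h12 _ hg' _ hf')).symm
end

section
/- Let H₁, …, H_N be subgroups of a group G that pairwise commute elementwise, and let K = H₁·H₂·⋯·H_N (which is a subgroup of G). Then for every homogeneous quasi-morphism φ on K, sup_{x,y ∈ K} φ([x,y]) = Σ_{i=1}^{N} sup_{x,y ∈ H_i} φ([x,y]). -/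
open scoped commutatorElement

/-!
A homogeneous quasi-morphism is additive on commuting elements, since the defect of
`(a * b) ^ n = a ^ n * b ^ n` grows linearly in `n` unless it vanishes. The multiplication map
`∏ᵢ Hᵢ → K` is a surjective homomorphism, so a commutator in `K` is the product of commutators
`⁅xᵢ, yᵢ⁆` with `xᵢ, yᵢ ∈ Hᵢ` chosen independently for different `i`, and `φ` maps it to
`∑ᵢ φ ⁅xᵢ, yᵢ⁆`. Hence the set of values of `φ` on commutators of `K` is the pointwise sum of the
corresponding sets for the `Hᵢ`, and suprema are additive for pointwise sums.
-/

open scoped Pointwise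

theorem isLUB_finsetSum {ι M : Type*} [AddCommGroup M] [Preorder M] [AddLeftMono M]
    {s : Finset ι} {S : ι → Set M} {a : ι → M} (h : ∀ i ∈ s, IsLUB (S i) (a i)) :
    IsLUB (∑ i ∈ s, S i) (∑ i ∈ s, a i) := by
  induction s using Finset.cons_induction with
  | empty => exact isLUB_singleton
  | cons i s hi ih =>
    rw [Finset.forall_mem_cons] at h
    simpa only [Finset.sum_cons] using h.1.add (ih h.2)

theorem noncommProd_univ_eq_prod_ofFn {M : Type*} [Monoid M] {n : ℕ} (f : Fin n → M)
    (comm : ((Finset.univ : Finset (Fin n)) : Set (Fin n)).Pairwise (Function.onFun Commute f)) :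
    Finset.univ.noncommProd f comm = (List.ofFn f).prod := by
  simp only [Finset.noncommProd, Fin.univ_val_map, Multiset.noncommProd_coe]

section Subgroups

variable {G : Type*} [Group G]

theorem mem_iSup_iff_exists_prod_ofFn {n : ℕ} {H : Fin n → Subgroup G}
    (hcomm : Pairwise fun i j => ∀ x y : G, x ∈ H i → y ∈ H j → Commute x y) {x : G} :
    x ∈ ⨆ i, H i ↔ ∃ h : Fin n → G, (∀ i, h i ∈ H i) ∧ x = (List.ofFn h).prod := by
  rw [← Subgroup.noncommPiCoprod_range (hcomm := hcomm), MonoidHom.mem_range]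
  simp only [Subgroup.noncommPiCoprod_apply]
  constructor
  · rintro ⟨h, rfl⟩
    exact ⟨fun i => h i, fun i => (h i).2, noncommProd_univ_eq_prod_ofFn _ _⟩
  · rintro ⟨h, hh, rfl⟩
    exact ⟨fun i => ⟨h i, hh i⟩, noncommProd_univ_eq_prod_ofFn _ _⟩

/-- `φ` restricts to a homogeneous quasi-morphism on the subgroup `H`. The function `φ` is defined
on the ambient group so that it can be restricted to smaller subgroups without coercions; its
values outside `H` are irrelevant. -/
structure IsHomogeneousQuasimorphismOn (φ : G → ℝ) (H : Subgroup G) : Prop where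
  exists_bound : ∃ C : ℝ, ∀ a ∈ H, ∀ b ∈ H, |φ (a * b) - φ a - φ b| ≤ C
  map_zpow : ∀ a ∈ H, ∀ n : ℤ, φ (a ^ n) = n * φ a

/-- The set of values of `φ` on commutators of elements of `H`; its supremum is the quantity
written `‖φ‖_H` in the literature. -/
def commutatorValues (φ : G → ℝ) (H : Subgroup G) : Set ℝ :=
  {r | ∃ x ∈ H, ∃ y ∈ H, r = φ ⁅x, y⁆}

theorem commutatorValues_nonempty (φ : G → ℝ) (H : Subgroup G) : (commutatorValues φ H).Nonempty :=
  ⟨φ ⁅1, 1⁆, 1, H.one_mem, 1, H.one_mem, rfl⟩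

namespace IsHomogeneousQuasimorphismOn

variable {φ : G → ℝ} {H K : Subgroup G} {a b : G}

theorem mono (hφ : IsHomogeneousQuasimorphismOn φ K) (hHK : H ≤ K) :
    IsHomogeneousQuasimorphismOn φ H where
  exists_bound := hφ.exists_bound.imp fun _ hC a ha b hb => hC a (hHK ha) b (hHK hb)
  map_zpow a ha := hφ.map_zpow a (hHK ha)

theorem map_one (hφ : IsHomogeneousQuasimorphismOn φ H) : φ 1 = 0 := by
  simpa using hφ.map_zpow 1 H.one_mem 0

theorem map_mul_of_commute (hφ : IsHomogeneousQuasimorphismOn φ H) (ha : a ∈ H) (hb : b ∈ H)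
    (hab : Commute a b) : φ (a * b) = φ a + φ b := by
  obtain ⟨C, hC⟩ := hφ.exists_bound
  have nsmul_defect_le (n : ℕ) : n • |φ (a * b) - φ a - φ b| ≤ C := by
    calc n • |φ (a * b) - φ a - φ b|
        = |φ (a ^ (n : ℤ) * b ^ (n : ℤ)) - φ (a ^ (n : ℤ)) - φ (b ^ (n : ℤ))| := by
          rw [← hab.mul_zpow, hφ.map_zpow _ (H.mul_mem ha hb), hφ.map_zpow _ ha,
            hφ.map_zpow _ hb, ← mul_sub, ← mul_sub, abs_mul]
          simp
      _ ≤ C := hC _ (H.zpow_mem ha _) _ (H.zpow_mem hb _)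
  have defect_eq_zero : φ (a * b) - φ a - φ b = 0 := by
    by_contra hne
    obtain ⟨n, hn⟩ := exists_lt_nsmul (abs_pos.2 hne) C
    exact (nsmul_defect_le n).not_gt hn
  linarith

theorem map_noncommProd (hφ : IsHomogeneousQuasimorphismOn φ H) {ι : Type*} (s : Finset ι)
    (f : ι → G) (comm : (s : Set ι).Pairwise (Function.onFun Commute f))
    (hf : ∀ i ∈ s, f i ∈ H) : φ (s.noncommProd f comm) = ∑ i ∈ s, φ (f i) := by
  induction s using Finset.cons_induction with
  | empty => simpa using hφ.map_one
  | cons i s hi ih =>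
    rw [Finset.forall_mem_cons] at hf
    have comm_s := comm.mono (Finset.coe_subset.2 (Finset.subset_cons hi))
    have commute_prod : Commute (f i) (s.noncommProd f comm_s) :=
      s.noncommProd_commute f comm_s _ fun j hj =>
        comm (Finset.mem_cons_self i s) (Finset.mem_cons_of_mem hj)
          (ne_of_mem_of_not_mem hj hi).symm
    rw [Finset.noncommProd_cons, Finset.sum_cons,
      hφ.map_mul_of_commute hf.1 (H.noncommProd_mem comm_s hf.2) commute_prod, ih comm_s hf.2]

theorem bddAbove_commutatorValues (hφ : IsHomogeneousQuasimorphismOn φ H) :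
    BddAbove (commutatorValues φ H) := by
  obtain ⟨C, hC⟩ := hφ.exists_bound
  refine ⟨3 * C, ?_⟩
  rintro _ ⟨x, hx, y, hy, rfl⟩
  have commutator_mem : ⁅x, y⁆ ∈ H :=
    H.commutator_le_self (Subgroup.commutator_mem_commutator hx hy)
  have hxy := abs_le.1 (hC x hx y hy)
  have hyx := abs_le.1 (hC y hy x hx)
  have hmul := abs_le.1 (hC ⁅x, y⁆ commutator_mem (y * x) (H.mul_mem hy hx))
  rw [show ⁅x, y⁆ * (y * x) = x * y by group] at hmul
  linarith

theorem isLUB_sSup_commutatorValues (hφ : IsHomogeneousQuasimorphismOn φ H) :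
    IsLUB (commutatorValues φ H) (sSup (commutatorValues φ H)) :=
  isLUB_csSup (commutatorValues_nonempty φ H) hφ.bddAbove_commutatorValues

section CommutingSubgroups

variable {ι : Type*} [Fintype ι] {H : ι → Subgroup G}

theorem map_noncommPiCoprod (hφ : IsHomogeneousQuasimorphismOn φ (⨆ i, H i))
    (hcomm : Pairwise fun i j => ∀ x y : G, x ∈ H i → y ∈ H j → Commute x y) (x : ∀ i, H i) :
    φ (Subgroup.noncommPiCoprod hcomm x) = ∑ i, φ (x i) := by
  rw [Subgroup.noncommPiCoprod_apply]
  exact hφ.map_noncommProd _ _ _ fun i _ => le_iSup H i (x i).2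

theorem map_commutatorElement_noncommPiCoprod (hφ : IsHomogeneousQuasimorphismOn φ (⨆ i, H i))
    (hcomm : Pairwise fun i j => ∀ x y : G, x ∈ H i → y ∈ H j → Commute x y) (x y : ∀ i, H i) :
    φ ⁅Subgroup.noncommPiCoprod hcomm x, Subgroup.noncommPiCoprod hcomm y⁆ =
      ∑ i, φ ⁅(x i : G), (y i : G)⁆ := by
  rw [← map_commutatorElement, hφ.map_noncommPiCoprod]
  rfl

theorem commutatorValues_iSup (hφ : IsHomogeneousQuasimorphismOn φ (⨆ i, H i))
    (hcomm : Pairwise fun i j => ∀ x y : G, x ∈ H i → y ∈ H j → Commute x y) :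
    commutatorValues φ (⨆ i, H i) = ∑ i, commutatorValues φ (H i) := by
  ext r
  rw [Set.mem_fintype_sum]
  constructor
  · rintro ⟨_, hx, _, hy, rfl⟩
    rw [← Subgroup.noncommPiCoprod_range (hcomm := hcomm)] at hx hy
    obtain ⟨x, rfl⟩ := hx
    obtain ⟨y, rfl⟩ := hy
    exact ⟨fun i => φ ⁅(x i : G), (y i : G)⁆, fun i => ⟨_, (x i).2, _, (y i).2, rfl⟩,
      (hφ.map_commutatorElement_noncommPiCoprod hcomm x y).symm⟩
  · rintro ⟨g, hg, rfl⟩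
    choose x hx y hy hxy using hg
    have mem_iSup (z : ∀ i, H i) : Subgroup.noncommPiCoprod hcomm z ∈ ⨆ i, H i :=
      Subgroup.noncommPiCoprod_range (hcomm := hcomm) ▸ ⟨z, rfl⟩
    refine ⟨_, mem_iSup fun i => ⟨x i, hx i⟩, _, mem_iSup fun i => ⟨y i, hy i⟩, ?_⟩
    rw [hφ.map_commutatorElement_noncommPiCoprod]
    exact Finset.sum_congr rfl fun i _ => hxy i

theorem sSup_commutatorValues_iSup (hφ : IsHomogeneousQuasimorphismOn φ (⨆ i, H i))
    (hcomm : Pairwise fun i j => ∀ x y : G, x ∈ H i → y ∈ H j → Commute x y) :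
    sSup (commutatorValues φ (⨆ i, H i)) = ∑ i, sSup (commutatorValues φ (H i)) := by
  have hsum : IsLUB (∑ i, commutatorValues φ (H i)) (∑ i, sSup (commutatorValues φ (H i))) :=
    isLUB_finsetSum fun i _ => (hφ.mono (le_iSup H i)).isLUB_sSup_commutatorValues
  rw [← hφ.commutatorValues_iSup hcomm] at hsum
  exact hφ.isLUB_sSup_commutatorValues.unique hsum

end CommutingSubgroups

end IsHomogeneousQuasimorphismOn

end Subgroups

/-- If the subgroups `H₁,…,H_N` pairwise commute elementwise and
`K = H₁ ⋯ H_N` is their product, then for every homogeneous quasi-morphism `φ`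
on `K` one has `sup_{x,y ∈ K} φ([x,y]) = Σᵢ sup_{x,y ∈ Hᵢ} φ([x,y])`. -/
theorem sup_commutator_quasimorphism_prod_subgroups {G : Type*} [Group G]
    (N : ℕ) (H : Fin N → Subgroup G)
    (hcomm : ∀ i j, i ≠ j → ∀ a ∈ H i, ∀ b ∈ H j, Commute a b)
    (K : Subgroup G)
    (hK : ∀ x : G, x ∈ K ↔
      ∃ h : Fin N → G, (∀ i, h i ∈ H i) ∧ x = (List.ofFn h).prod)
    (φ : G → ℝ)
    (hqm : ∃ C : ℝ, ∀ a ∈ K, ∀ b ∈ K, |φ (a * b) - φ a - φ b| ≤ C)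
    (hhom : ∀ a ∈ K, ∀ n : ℤ, φ (a ^ n) = n * φ a) :
    sSup {r : ℝ | ∃ x ∈ K, ∃ y ∈ K, r = φ ⁅x, y⁆} =
      ∑ i : Fin N, sSup {r : ℝ | ∃ x ∈ H i, ∃ y ∈ H i, r = φ ⁅x, y⁆} := by
  have hpairwise : Pairwise fun i j => ∀ x y : G, x ∈ H i → y ∈ H j → Commute x y :=
    fun i j hij x y hx hy => hcomm i j hij x hx y hy
  obtain rfl : K = ⨆ i, H i :=
    Subgroup.ext fun x => (hK x).trans (mem_iSup_iff_exists_prod_ofFn hpairwise).symm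
  have hφ : IsHomogeneousQuasimorphismOn φ (⨆ i, H i) := ⟨hqm, hhom⟩
  exact hφ.sSup_commutatorValues_iSup hpairwise
end
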